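/- arXiv:hep-lat/0202025 — 2 statements merged into one kernel-verified Lean document; each statement's English description precedes it below -/
import Mathlib

section
/- Let Q be an n×n invertible Hermitian complex matrix and b ∈ ℂⁿ. Define b⁺ = ½(I + sign(Q))b and b⁻ = ½(I − sign(Q))b. Then for every polynomial q one has the orthogonal decomposition ‖sign(Q)b − Q q(Q) b‖₂² = ‖b⁺ − Q q(Q) b⁺‖₂² + ‖b⁻ + Q q(Q) b⁻‖₂². -/
/-!
Since `Q` is invertible, `sign` is continuous with `sign² = 1` on the spectrum of `Q`, so
`S = sign Q` is a self-adjoint involution, and it commutes with `M = Q q(Q)`. Hence `b⁺` and `b⁻`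
lie in the eigenspaces of `S` for `1` and `-1`, and as `M` preserves these eigenspaces, so do
`u = b⁺ - M b⁺` and `v = b⁻ + M b⁻` respectively. Thus `u ⟂ v`, and since `S b - M b = u - v`, the
claim is Pythagoras' theorem. This argument lives in any complex Hilbert space; the star-algebra
isomorphism between matrices and operators on Euclidean space carries `sign` across.
-/

open Matrix Polynomial

/-- The Euclidean (l2) norm on `ℂⁿ`. -/
noncomputable def e2norm {n : ℕ} (x : Fin n → ℂ) : ℝ :=
  Real.sqrt (∑ i, ‖x i‖ ^ 2)

theorem continuousOn_real_sign : ContinuousOn Real.sign {0}ᶜ := by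
  intro x hx
  refine ContinuousAt.continuousWithinAt ?_
  rcases lt_or_gt_of_ne hx with hneg | hpos
  · exact continuousAt_const.congr
      ((eventually_lt_nhds hneg).mono fun y hy => (Real.sign_of_neg hy).symm)
  · exact continuousAt_const.congr
      ((eventually_gt_nhds hpos).mono fun y hy => (Real.sign_of_pos hy).symm)

theorem continuousOn_sign_spectrum {A : Type*} [Ring A] [Algebra ℝ A] {a : A} (ha : IsUnit a) :
    ContinuousOn Real.sign (spectrum ℝ a) :=
  continuousOn_real_sign.mono fun _ hx => ne_of_mem_of_not_mem hx (spectrum.zero_notMem ℝ ha)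

theorem cfc_sign_mul_self {A : Type*} [Ring A] [StarRing A] [TopologicalSpace A] [Algebra ℝ A]
    [ContinuousFunctionalCalculus ℝ A IsSelfAdjoint] {a : A} (ha : IsSelfAdjoint a)
    (hunit : IsUnit a) : cfc Real.sign a * cfc Real.sign a = 1 := by
  have hcont := continuousOn_sign_spectrum hunit
  have hsq : (spectrum ℝ a).EqOn (fun x => Real.sign x * Real.sign x) (fun _ => 1) := by
    intro x hx
    have hx0 : x ≠ 0 := ne_of_mem_of_not_mem hx (spectrum.zero_notMem ℝ hunit)
    rcases Real.sign_apply_eq_of_ne_zero x hx0 with h | h <;> simp [h]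
  rw [← cfc_mul Real.sign Real.sign a, cfc_congr hsq, cfc_const_one ℝ a]

section SymmetricOperator

variable {𝕜 E : Type*} [RCLike 𝕜] [SeminormedAddCommGroup E] [InnerProductSpace 𝕜 E]

theorem inner_eq_zero_of_map_eq_self_of_map_eq_neg {S : E →ₗ[𝕜] E} (hS : S.IsSymmetric) {u v : E}
    (hu : S u = u) (hv : S v = -v) : inner 𝕜 u v = 0 := by
  have h := hS u v
  rw [hu, hv, inner_neg_right] at h
  exact self_eq_neg.mp h

theorem norm_map_add_sub_map_add_sq {S M : E →ₗ[𝕜] E} (hS : S.IsSymmetric) (hSM : Commute S M)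
    {x y : E} (hx : S x = x) (hy : S y = -y) :
    ‖S (x + y) - M (x + y)‖ ^ 2 = ‖x - M x‖ ^ 2 + ‖y + M y‖ ^ 2 := by
  have hcomm (z : E) : S (M z) = M (S z) := LinearMap.congr_fun hSM z
  have hu : S (x - M x) = x - M x := by rw [map_sub, hcomm, hx]
  have hv : S (y + M y) = -(y + M y) := by rw [map_add, hcomm, hy, map_neg, neg_add]
  have hdiff : S (x + y) - M (x + y) = (x - M x) - (y + M y) := by
    rw [map_add, map_add, hx, hy]
    abel
  rw [hdiff, norm_sub_sq (𝕜 := 𝕜), inner_eq_zero_of_map_eq_self_of_map_eq_neg hS hu hv]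
  simp

end SymmetricOperator

theorem sign_error_orthogonal_decomposition_general {H : Type*} [NormedAddCommGroup H]
    [InnerProductSpace ℂ H] [CompleteSpace H] {T M : H →L[ℂ] H} (hT : IsSelfAdjoint T)
    (hTunit : IsUnit T) (hTM : Commute T M) (b bp bm : H)
    (hbp : bp = (2 : ℂ)⁻¹ • (b + cfc Real.sign T b))
    (hbm : bm = (2 : ℂ)⁻¹ • (b - cfc Real.sign T b)) :
    ‖cfc Real.sign T b - M b‖ ^ 2 = ‖bp - M bp‖ ^ 2 + ‖bm + M bm‖ ^ 2 := by
  set S := cfc Real.sign T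
  have hS : IsSelfAdjoint S := cfc_predicate Real.sign T
  have hSS : S (S b) = b := DFunLike.congr_fun (cfc_sign_mul_self hT hTunit) b
  have hSM : Commute (S : H →ₗ[ℂ] H) M :=
    (hTM.cfc_real Real.sign).map ContinuousLinearMap.toLinearMapRingHom
  have hSbp : S bp = bp := by rw [hbp, map_smul, map_add, hSS, add_comm]
  have hSbm : S bm = -bm := by rw [hbm, map_smul, map_sub, hSS, ← smul_neg, neg_sub]
  have hb : b = bp + bm := by rw [hbp, hbm]; module
  rw [hb]
  exact norm_map_add_sub_map_add_sq hS.isSymmetric hSM hSbp hSbm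

theorem commute_self_mul_aeval {R A : Type*} [CommSemiring R] [Semiring A] [Algebra R A] (a : A)
    (p : R[X]) : Commute a (a * aeval a p) := by
  have h : Commute (aeval a X) (aeval a p) := (Commute.all X p).map (aeval a)
  rw [aeval_X] at h
  exact (Commute.refl a).mul_right h

theorem e2norm_eq_norm_toLp {n : ℕ} (x : Fin n → ℂ) : e2norm x = ‖WithLp.toLp 2 x‖ :=
  (EuclideanSpace.norm_eq _).symm

theorem cfc_toEuclideanCLM_toLp {ι : Type*} [Fintype ι] [DecidableEq ι] {Q : Matrix ι ι ℂ}
    (hQ : Q.IsHermitian) (f : ℝ → ℝ) (x : ι → ℂ) :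
    cfc f (toEuclideanCLM (𝕜 := ℂ) Q) (WithLp.toLp 2 x) = WithLp.toLp 2 (hQ.cfc f *ᵥ x) := by
  let Φ := toEuclideanCLM (𝕜 := ℂ) (n := ι)
  have hΦ : Continuous Φ :=
    (Φ.toAlgEquiv.toLinearMap : Matrix ι ι ℂ →ₗ[ℂ] _).continuous_of_finiteDimensional
  have hmap : Φ (cfc f Q) = cfc f (Φ Q) :=
    StarAlgHomClass.map_cfc (S := ℂ) Φ f Q (Q.finite_real_spectrum.continuousOn f) hΦ
      hQ.isSelfAdjoint (hQ.isSelfAdjoint.map Φ)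
  rw [← hQ.cfc_eq, ← toEuclideanCLM_toLp, ← hmap]

/-- For an invertible Hermitian `Q`, with `sign Q` the matrix sign function,
`b⁺ = ½(I + sign Q)b` and `b⁻ = ½(I - sign Q)b`, for every polynomial `q` one has the
orthogonal decomposition
`‖sign(Q)b − Q q(Q) b‖² = ‖b⁺ − Q q(Q) b⁺‖² + ‖b⁻ + Q q(Q) b⁻‖²`. -/
theorem sign_error_orthogonal_decomposition {n : ℕ}
    (Q : Matrix (Fin n) (Fin n) ℂ) (hQ : Q.IsHermitian) (hQinv : IsUnit Q.det)
    (b : Fin n → ℂ)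
    (signQ : Matrix (Fin n) (Fin n) ℂ) (hsign : signQ = hQ.cfc Real.sign)
    (bp bm : Fin n → ℂ)
    (hbp : bp = (2 : ℂ)⁻¹ • (((1 : Matrix (Fin n) (Fin n) ℂ) + signQ) *ᵥ b))
    (hbm : bm = (2 : ℂ)⁻¹ • (((1 : Matrix (Fin n) (Fin n) ℂ) - signQ) *ᵥ b))
    (q : Polynomial ℂ) :
    e2norm (signQ *ᵥ b - Q *ᵥ ((Polynomial.aeval Q q) *ᵥ b)) ^ 2 =
      e2norm (bp - Q *ᵥ ((Polynomial.aeval Q q) *ᵥ bp)) ^ 2 +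
        e2norm (bm + Q *ᵥ ((Polynomial.aeval Q q) *ᵥ bm)) ^ 2 := by
  let Φ := toEuclideanCLM (𝕜 := ℂ) (n := Fin n)
  have key := sign_error_orthogonal_decomposition_general (hQ.isSelfAdjoint.map Φ)
    (((isUnit_iff_isUnit_det Q).mpr hQinv).map Φ) ((commute_self_mul_aeval Q q).map Φ)
    (WithLp.toLp 2 b) (WithLp.toLp 2 bp) (WithLp.toLp 2 bm)
    (by simp [Φ, hbp, hsign, cfc_toEuclideanCLM_toLp hQ, add_mulVec])
    (by simp [Φ, hbm, hsign, cfc_toEuclideanCLM_toLp hQ, sub_mulVec])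
  simpa [Φ, hsign, cfc_toEuclideanCLM_toLp hQ, e2norm_eq_norm_toLp] using key
end

section
/- Let A be an n×n complex matrix, b ∈ ℂⁿ with b ≠ 0, V an n×k complex matrix, T a k×k tridiagonal complex matrix (T_{ij} = 0 whenever |i−j| > 1), β a scalar and w ∈ ℂⁿ, such that A V = V T + β w e_kᵀ and V e₁ = b/‖b‖₂. Let z ∈ ℂᵏ and suppose T + z e_kᵀ is diagonalizable, T + z e_kᵀ = S D S⁻¹ with D diagonal with distinct diagonal entries λ₁, …, λ_k ∈ ℂ. Let f : ℂ → ℂ be any function, define f(T + z e_kᵀ) := S f(D) S⁻¹ where f(D) is the diagonal matrix with entries f(λᵢ), and let p be the unique polynomial of degree ≤ k−1 with p(λᵢ) = f(λᵢ) for i = 1, …, k. Then V f(T + z e_kᵀ) e₁ ‖b‖₂ = p(A) b. -/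
open Matrix Polynomial

theorem e2norm_ne_zero {n : ℕ} {x : Fin n → ℂ} (hx : x ≠ 0) : e2norm x ≠ 0 := by
  rwa [e2norm_eq_norm_toLp, norm_ne_zero_iff, ne_eq, WithLp.toLp_eq_zero]

section FunctionalCalculus

theorem aeval_units_conj {R B : Type*} [CommSemiring R] [Semiring B] [Algebra R B]
    (u : Bˣ) (a : B) (p : R[X]) :
    aeval (u * a * ↑u⁻¹ : B) p = u * aeval a p * ↑u⁻¹ :=
  aeval_algHom_apply (MulSemiringAction.toAlgHom R B (ConjAct.toConjAct u)) a p

variable {m R B : Type*} [Fintype m] [DecidableEq m]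

theorem aeval_diagonal [CommSemiring R] [Semiring B] [Algebra R B] (d : m → B) (p : R[X]) :
    aeval (diagonal d) p = diagonal fun i => aeval (d i) p := by
  rw [← aeval_pi_apply]
  exact aeval_algHom_apply (diagonalAlgHom R) d p

theorem aeval_conj_diagonal [CommRing R] {S : Matrix m m R} (hS : IsUnit S.det)
    (d : m → R) (p : R[X]) :
    aeval (S * diagonal d * S⁻¹) p = S * diagonal (fun i => p.eval (d i)) * S⁻¹ := by
  obtain ⟨U, rfl⟩ := (isUnit_iff_isUnit_det S).2 hS
  simp only [← coe_units_inv, aeval_units_conj, aeval_diagonal, coe_aeval_eq_eval]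

end FunctionalCalculus

section RankOnePerturbation

variable {m l R : Type*} [Fintype m] [DecidableEq m] [Fintype l] [DecidableEq l]

theorem pow_mulVec_of_mul_eq_mul_add_vecMulVec [Semiring R]
    {A : Matrix m m R} {V : Matrix m l R} {M : Matrix l l R} {u : m → R} {φ v : l → R}
    (hAV : A * V = V * M + vecMulVec u φ) {j : ℕ} (hφ : ∀ i < j, φ ⬝ᵥ (M ^ i *ᵥ v) = 0) :
    A ^ j *ᵥ (V *ᵥ v) = V *ᵥ (M ^ j *ᵥ v) := by
  induction j with
  | zero => simp only [pow_zero, one_mulVec]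
  | succ j ih =>
    calc A ^ (j + 1) *ᵥ (V *ᵥ v)
        = A *ᵥ (A ^ j *ᵥ (V *ᵥ v)) := by rw [pow_succ', ← mulVec_mulVec]
      _ = (A * V) *ᵥ (M ^ j *ᵥ v) := by
        rw [ih fun i hi => hφ i (hi.trans j.lt_succ_self), mulVec_mulVec]
      _ = (V * M) *ᵥ (M ^ j *ᵥ v) := by
        rw [hAV, add_mulVec, vecMulVec_mulVec, hφ j j.lt_succ_self, MulOpposite.op_zero,
          zero_smul, add_zero]
      _ = V *ᵥ (M ^ (j + 1) *ᵥ v) := by rw [pow_succ', ← mulVec_mulVec, ← mulVec_mulVec]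

theorem aeval_mulVec_of_mul_eq_mul_add_vecMulVec [CommSemiring R]
    {A : Matrix m m R} {V : Matrix m l R} {M : Matrix l l R} {u : m → R} {φ v : l → R}
    (hAV : A * V = V * M + vecMulVec u φ) {p : R[X]}
    (hφ : ∀ i < p.natDegree, φ ⬝ᵥ (M ^ i *ᵥ v) = 0) :
    aeval A p *ᵥ (V *ᵥ v) = V *ᵥ (aeval M p *ᵥ v) := by
  simp only [aeval_eq_sum_range, sum_mulVec, mulVec_sum, smul_mulVec, mulVec_smul]
  refine Finset.sum_congr rfl fun j hj => ?_
  have hjp : j ≤ p.natDegree := Finset.mem_range_succ_iff.1 hj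
  rw [pow_mulVec_of_mul_eq_mul_add_vecMulVec hAV fun i hi => hφ i (hi.trans_le hjp)]

end RankOnePerturbation

section UpperHessenberg

/-- A square matrix is upper Hessenberg if all its entries below the first subdiagonal vanish. -/
def IsUpperHessenberg {k : ℕ} {R : Type*} [Zero R] (M : Matrix (Fin k) (Fin k) R) : Prop :=
  ∀ i j : Fin k, (j : ℕ) + 1 < i → M i j = 0

namespace IsUpperHessenberg

variable {k : ℕ} {R : Type*} [Semiring R] {M : Matrix (Fin k) (Fin k) R}

theorem add_vecMulVec_single_last (hM : IsUpperHessenberg M) (z : Fin k → R) {l : Fin k}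
    (hl : (l : ℕ) + 1 = k) : IsUpperHessenberg (M + vecMulVec z (Pi.single l 1)) := by
  intro i j hij
  have hjl : j ≠ l := by lia
  rw [Matrix.add_apply, hM i j hij, vecMulVec_apply, Pi.single_eq_of_ne hjl, mul_zero, add_zero]

theorem mulVec_apply_eq_zero (hM : IsUpperHessenberg M) {v : Fin k → R} {r : ℕ}
    (hv : ∀ i : Fin k, r < i → v i = 0) {i : Fin k} (hi : r + 1 < i) : (M *ᵥ v) i = 0 := by
  rw [mulVec, dotProduct]
  refine Finset.sum_eq_zero fun j _ => ?_
  rcases lt_or_ge r (j : ℕ) with hj | hj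
  · rw [hv j hj, mul_zero]
  · rw [hM i j (by lia), zero_mul]

theorem pow_mulVec_apply_eq_zero (hM : IsUpperHessenberg M) {v : Fin k → R} {r : ℕ}
    (hv : ∀ i : Fin k, r < i → v i = 0) (j : ℕ) :
    ∀ i : Fin k, r + j < i → (M ^ j *ᵥ v) i = 0 := by
  induction j with
  | zero => simpa only [pow_zero, one_mulVec, add_zero] using hv
  | succ j ih =>
    intro i hi
    rw [pow_succ', ← mulVec_mulVec]
    exact hM.mulVec_apply_eq_zero ih hi

theorem pow_mulVec_single_zero_apply_eq_zero (hM : IsUpperHessenberg M) (hk : 0 < k) {j : ℕ}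
    {i : Fin k} (hji : j < i) : (M ^ j *ᵥ Pi.single ⟨0, hk⟩ 1) i = 0 := by
  refine hM.pow_mulVec_apply_eq_zero (r := 0) (fun i' hi' => ?_) j i (by rwa [zero_add])
  exact Pi.single_eq_of_ne (Fin.ne_of_val_ne hi'.ne') 1

end IsUpperHessenberg

theorem aeval_mulVec_of_isUpperHessenberg {m R : Type*} [Fintype m] [DecidableEq m]
    [CommSemiring R] {k : ℕ} (hk : 0 < k) {A : Matrix m m R} {V : Matrix m (Fin k) R}
    {M : Matrix (Fin k) (Fin k) R} (hM : IsUpperHessenberg M) {u : m → R}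
    (hAV : A * V = V * M + vecMulVec u (Pi.single ⟨k - 1, Nat.sub_lt hk one_pos⟩ 1))
    {p : R[X]} (hp : p.degree < k) :
    aeval A p *ᵥ (V *ᵥ Pi.single ⟨0, hk⟩ 1) = V *ᵥ (aeval M p *ᵥ Pi.single ⟨0, hk⟩ 1) := by
  refine aeval_mulVec_of_mul_eq_mul_add_vecMulVec hAV fun i hi => ?_
  have hpk : p.natDegree < k :=
    (natDegree_lt_iff_degree_lt (ne_zero_of_natDegree_gt hi)).2 hp
  rw [single_one_dotProduct]
  exact hM.pow_mulVec_single_zero_apply_eq_zero hk (show i < k - 1 by lia)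

end UpperHessenberg

theorem lanczos_function_exactness_general {m R : Type*} [Fintype m] [DecidableEq m] [CommRing R]
    {k : ℕ} (hk : 0 < k) (A : Matrix m m R) (b : m → R) (V : Matrix m (Fin k) R)
    (T : Matrix (Fin k) (Fin k) R) (hT : IsUpperHessenberg T) (w : m → R)
    (hrel : A * V = V * T + vecMulVec w (Pi.single ⟨k - 1, Nat.sub_lt hk one_pos⟩ 1))
    (c : R) (hV1 : c • V *ᵥ Pi.single ⟨0, hk⟩ 1 = b) (z : Fin k → R)
    (S : Matrix (Fin k) (Fin k) R) (hS : IsUnit S.det) (lam : Fin k → R)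
    (hdiag : T + vecMulVec z (Pi.single ⟨k - 1, Nat.sub_lt hk one_pos⟩ 1) =
      S * diagonal lam * S⁻¹)
    (f : R → R) (p : R[X]) (hp : p.degree < k) (hinterp : ∀ i, p.eval (lam i) = f (lam i)) :
    c • (V *ᵥ ((S * diagonal (f ∘ lam) * S⁻¹) *ᵥ Pi.single ⟨0, hk⟩ 1)) = aeval A p *ᵥ b := by
  set e₁ : Fin k → R := Pi.single ⟨0, hk⟩ 1
  set eₖ : Fin k → R := Pi.single ⟨k - 1, Nat.sub_lt hk one_pos⟩ 1
  have hAV : A * V = V * (T + vecMulVec z eₖ) + vecMulVec (w - V *ᵥ z) eₖ := by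
    rw [hrel, Matrix.mul_add, mul_vecMulVec, sub_vecMulVec, add_assoc, add_sub_cancel]
  have hM : IsUpperHessenberg (T + vecMulVec z eₖ) :=
    hT.add_vecMulVec_single_last z (Nat.sub_add_cancel hk)
  have hpM : aeval (T + vecMulVec z eₖ) p = S * diagonal (f ∘ lam) * S⁻¹ := by
    rw [hdiag, aeval_conj_diagonal hS, funext hinterp, Function.comp_def]
  rw [← hpM, ← aeval_mulVec_of_isUpperHessenberg hk hM hAV hp, ← mulVec_smul, hV1]

/-- If `A V = V T + β w e_kᵀ` with `T` tridiagonal, `V e₁ = b / ‖b‖₂`,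
and `T + z e_kᵀ = S D S⁻¹` is diagonalizable with distinct eigenvalues `λ₁, …, λ_k`, then
for any function `f : ℂ → ℂ`, setting `f(T + z e_kᵀ) := S f(D) S⁻¹`, and `p` the
interpolating polynomial of degree `≤ k - 1` with `p(λᵢ) = f(λᵢ)`, one has
`V f(T + z e_kᵀ) e₁ ‖b‖₂ = p(A) b`. -/
theorem lanczos_function_exactness {n k : ℕ} (hk : 0 < k)
    (A : Matrix (Fin n) (Fin n) ℂ) (b : Fin n → ℂ) (hb : b ≠ 0)
    (V : Matrix (Fin n) (Fin k) ℂ) (T : Matrix (Fin k) (Fin k) ℂ)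
    (hT : ∀ i j : Fin k, 1 < ((i : ℤ) - (j : ℤ)).natAbs → T i j = 0)
    (β : ℂ) (w : Fin n → ℂ)
    (hrel : A * V = V * T +
      β • vecMulVec w (Pi.single (⟨k - 1, Nat.sub_lt hk one_pos⟩ : Fin k) 1))
    (hV1 : V *ᵥ Pi.single (⟨0, hk⟩ : Fin k) 1 = (e2norm b : ℂ)⁻¹ • b)
    (z : Fin k → ℂ)
    (S : Matrix (Fin k) (Fin k) ℂ) (hS : IsUnit S.det)
    (lam : Fin k → ℂ) (hlam : Function.Injective lam)
    (hdiag : T + vecMulVec z (Pi.single (⟨k - 1, Nat.sub_lt hk one_pos⟩ : Fin k) 1) =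
      S * Matrix.diagonal lam * S⁻¹)
    (f : ℂ → ℂ)
    (p : Polynomial ℂ) (hp : p.degree < (k : ℕ))
    (hinterp : ∀ i, p.eval (lam i) = f (lam i)) :
    (e2norm b : ℂ) •
        (V *ᵥ ((S * Matrix.diagonal (f ∘ lam) * S⁻¹) *ᵥ Pi.single (⟨0, hk⟩ : Fin k) 1)) =
      (Polynomial.aeval A p) *ᵥ b := by
  exact lanczos_function_exactness_general hk A b V T (fun i j hij => hT i j (by lia)) (β • w)
    (by rwa [smul_vecMulVec]) (e2norm b)
    (by rw [hV1, smul_inv_smul₀ (Complex.ofReal_ne_zero.2 (e2norm_ne_zero hb))])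
    z S hS lam hdiag f p hp hinterp
end
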